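/- Let (Θ,I,p) be a statistical model, q ∈ P_+(I), κ ∈ ℝ, and suppose the covariant Hessian bound H_W(θ) = ∇²_θ D_KL(p(θ)‖q) − Σ_k (∂_{θ_k}D_KL(p(θ)‖q))·Γ^{W,k}(θ) ⪰ κ G_W(θ) holds for all θ ∈ Θ. Let θ_t, t ∈ [0,1], be a constant-speed geodesic of G_W with g_W(θ̇_t, θ̇_t) = d_W(θ_0,θ_1)² for all t. Then ∫₀¹ (1−t) · (d²/dt²) D_KL(p(θ_t)‖q) dt ≥ (κ/2) · d_W(θ_0,θ_1)², and hence by second-order Taylor expansion D_KL(p(θ_1)‖q) ≥ D_KL(p(θ_0)‖q) + (d/dt)|_{t=0} D_KL(p(θ_t)‖q) + (κ/2) d_W(θ_0,θ_1)². -/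

import Mathlib

open Matrix Set

namespace StatRicci

noncomputable section

open scoped Classical in
/-- The Moore–Penrose pseudoinverse of a square real matrix, characterized by the
four Penrose conditions. -/
def mpinv {k : Type*} [Fintype k] [DecidableEq k] (A : Matrix k k ℝ) : Matrix k k ℝ :=
  if h : ∃ B : Matrix k k ℝ,
      A * B * A = A ∧ B * A * B = B ∧ (A * B)ᵀ = A * B ∧ (B * A)ᵀ = B * A
  then h.choose else 0

/-- `q` is a strictly positive probability vector: `q ∈ P₊(I)`. -/
def posProb {n : ℕ} (q : Fin n → ℝ) : Prop :=
  (∀ i, 0 < q i) ∧ ∑ i, q i = 1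

/-- `ω` is a symmetric nonnegative weight matrix with zero diagonal:
`ω i j = ω j i > 0` on edges and `ω i j = 0` otherwise. -/
def isWeight {n : ℕ} (ω : Fin n → Fin n → ℝ) : Prop :=
  (∀ i j, ω i j = ω j i) ∧ (∀ i j, 0 ≤ ω i j) ∧ ∀ i, ω i i = 0

/-- The graph on `I` with edge set `{(i,j) : ω i j > 0}` is connected. -/
def isConn {n : ℕ} (ω : Fin n → Fin n → ℝ) : Prop :=
  (SimpleGraph.fromRel fun i j => 0 < ω i j).Connected

/-- Normalized volume form `d_i`. -/
def dvol {n : ℕ} (ω : Fin n → Fin n → ℝ) (i : Fin n) : ℝ :=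
  (∑ j, ω i j) / ∑ k, ∑ j, ω k j

/-- Edge weight `Λ(p)_{(i,j),(i,j)} = ((p i)/d_i + (p j)/d_j)/2`. -/
def lamW {n : ℕ} (ω : Fin n → Fin n → ℝ) (p : Fin n → ℝ) (i j : Fin n) : ℝ :=
  (p i / dvol ω i + p j / dvol ω j) / 2

/-- The weighted Laplacian `L(p) = Dᵀ Λ(p) D`, written entrywise as a sum over edges
(each unordered edge `(i,j)` counted once, with `j < i`; non-edges contribute `0`
since `ω i j = 0` there). -/
def Lap {n : ℕ} (ω : Fin n → Fin n → ℝ) (p : Fin n → ℝ) : Matrix (Fin n) (Fin n) ℝ :=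
  Matrix.of fun k l => ∑ i, ∑ j,
    if j < i then
      ω i j * lamW ω p i j *
        (((if k = i then (1 : ℝ) else 0) - if k = j then 1 else 0) *
          ((if l = i then (1 : ℝ) else 0) - if l = j then 1 else 0))
    else 0

/-- Partial derivative `∂_{θ_a} f (θ)`. -/
def pd {d : ℕ} (f : (Fin d → ℝ) → ℝ) (a : Fin d) (θ : Fin d → ℝ) : ℝ :=
  fderiv ℝ f θ (Pi.single a 1)

/-- Euclidean gradient `∇_θ f (θ)`. -/
def grad {d : ℕ} (f : (Fin d → ℝ) → ℝ) (θ : Fin d → ℝ) : Fin d → ℝ :=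
  fun a => pd f a θ

/-- Euclidean Hessian `∇²_θ f (θ)`. -/
def hess {d : ℕ} (f : (Fin d → ℝ) → ℝ) (θ : Fin d → ℝ) : Matrix (Fin d) (Fin d) ℝ :=
  Matrix.of fun a b => pd (pd f b) a θ

/-- Jacobian matrix `J_θ p(θ) ∈ ℝ^{n×d}`. -/
def Jac {n d : ℕ} (p : (Fin d → ℝ) → Fin n → ℝ) (θ : Fin d → ℝ) :
    Matrix (Fin n) (Fin d) ℝ :=
  Matrix.of fun i a => pd (fun x => p x i) a θ

/-- The Kullback–Leibler divergence `D_KL(p‖q)`. -/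
def KLdiv {n : ℕ} (p q : Fin n → ℝ) : ℝ :=
  ∑ i, p i * Real.log (p i / q i)

/-- Wasserstein metric tensor `G_W(θ) = J_θp(θ)ᵀ L(p(θ))† J_θp(θ)`. -/
def GW {n d : ℕ} (ω : Fin n → Fin n → ℝ) (p : (Fin d → ℝ) → Fin n → ℝ)
    (θ : Fin d → ℝ) : Matrix (Fin d) (Fin d) ℝ :=
  (Jac p θ)ᵀ * mpinv (Lap ω (p θ)) * Jac p θ

/-- Fisher–Rao metric tensor `G_F(θ)`. -/
def GF {n d : ℕ} (p : (Fin d → ℝ) → Fin n → ℝ) (θ : Fin d → ℝ) :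
    Matrix (Fin d) (Fin d) ℝ :=
  Matrix.of fun a b => ∑ i, (1 / p θ i) * pd (fun x => p x i) a θ * pd (fun x => p x i) b θ

/-- Christoffel symbol matrices `Γ^{W,k}(θ)` of `G_W`. -/
def Christoffel {n d : ℕ} (ω : Fin n → Fin n → ℝ) (p : (Fin d → ℝ) → Fin n → ℝ)
    (k : Fin d) (θ : Fin d → ℝ) : Matrix (Fin d) (Fin d) ℝ :=
  Matrix.of fun i j => (1 / 2) * ∑ l,
    (GW ω p θ)⁻¹ k l *
      (pd (fun x => GW ω p x j l) i θ + pd (fun x => GW ω p x i l) j θ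
        - pd (fun x => GW ω p x i j) l θ)

/-- Loewner-type ordering via quadratic forms: `matGE A B` means `A ⪰ B`. -/
def matGE {d : ℕ} (A B : Matrix (Fin d) (Fin d) ℝ) : Prop :=
  ∀ x : Fin d → ℝ, x ⬝ᵥ B.mulVec x ≤ x ⬝ᵥ A.mulVec x

/-- `γ` is a constant-speed geodesic of `(Θ, g_W)` with values in `S` on `[0,1]`. -/
def IsGeodesicOn {n d : ℕ} (ω : Fin n → Fin n → ℝ) (p : (Fin d → ℝ) → Fin n → ℝ)
    (S : Set (Fin d → ℝ)) (γ : ℝ → Fin d → ℝ) : Prop :=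
  ContDiff ℝ 2 γ ∧ (∀ t ∈ Icc (0 : ℝ) 1, γ t ∈ S) ∧
    ∀ t ∈ Icc (0 : ℝ) 1, ∀ k,
      deriv (fun s => deriv γ s k) t
        + ∑ i, ∑ j, Christoffel ω p k (γ t) i j * deriv γ t i * deriv γ t j = 0

/-- Squared Wasserstein distance `d_W(θ₀,θ₁)²` on parameter space. -/
def dW2 {n d : ℕ} (ω : Fin n → Fin n → ℝ) (p : (Fin d → ℝ) → Fin n → ℝ)
    (S : Set (Fin d → ℝ)) (θ0 θ1 : Fin d → ℝ) : ℝ :=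
  sInf {E : ℝ | ∃ γ : ℝ → Fin d → ℝ, ContDiff ℝ 1 γ ∧ (∀ t ∈ Icc (0 : ℝ) 1, γ t ∈ S) ∧
    γ 0 = θ0 ∧ γ 1 = θ1 ∧
    E = ∫ t in (0 : ℝ)..1, deriv γ t ⬝ᵥ (GW ω p (γ t)).mulVec (deriv γ t)}

/-- `Ric(Θ,I,p) ≥ κ`: geodesic `κ`-convexity of the KL divergence. -/
def RicGE {n d : ℕ} (ω : Fin n → Fin n → ℝ) (p : (Fin d → ℝ) → Fin n → ℝ)
    (S : Set (Fin d → ℝ)) (q : Fin n → ℝ) (κ : ℝ) : Prop :=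
  ∀ γ : ℝ → Fin d → ℝ, IsGeodesicOn ω p S γ →
    ∀ t ∈ Icc (0 : ℝ) 1,
      KLdiv (p (γ t)) q ≤ (1 - t) * KLdiv (p (γ 0)) q + t * KLdiv (p (γ 1)) q
        - κ / 2 * t * (1 - t) * dW2 ω p S (γ 0) (γ 1)

/-- Relative Fisher information `I(p(θ)‖q)`. -/
def relFisher {n d : ℕ} (ω : Fin n → Fin n → ℝ) (p : (Fin d → ℝ) → Fin n → ℝ)
    (q : Fin n → ℝ) (θ : Fin d → ℝ) : ℝ :=
  grad (fun x => KLdiv (p x) q) θ ⬝ᵥ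
    ((GW ω p θ)⁻¹).mulVec (grad (fun x => KLdiv (p x) q) θ)

/-- The RIW matrix
`G_F(θ) + Σ_a ∇²_θ p_a(θ)·log(p_a(θ)/q_a) − Σ_k ∂_{θ_k}D_KL(p(θ)‖q)·Γ^{W,k}(θ)`. -/
def RIWmat {n d : ℕ} (ω : Fin n → Fin n → ℝ) (p : (Fin d → ℝ) → Fin n → ℝ)
    (q : Fin n → ℝ) (θ : Fin d → ℝ) : Matrix (Fin d) (Fin d) ℝ :=
  GF p θ + (∑ i, Real.log (p θ i / q i) • hess (fun x => p x i) θ)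
    - ∑ k, pd (fun x => KLdiv (p x) q) k θ • Christoffel ω p k θ

/-- The covariant (Wasserstein) Hessian `H_W(θ)` of the KL divergence. -/
def HW {n d : ℕ} (ω : Fin n → Fin n → ℝ) (p : (Fin d → ℝ) → Fin n → ℝ)
    (q : Fin n → ℝ) (θ : Fin d → ℝ) : Matrix (Fin d) (Fin d) ℝ :=
  hess (fun x => KLdiv (p x) q) θ
    - ∑ k, pd (fun x => KLdiv (p x) q) k θ • Christoffel ω p k θ



theorem contDiffAt_deriv_aux {m k : WithTop ℕ∞} {f : ℝ → ℝ} {t : ℝ} (h : ContDiffAt ℝ k f t)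
    (hm : m + 1 ≤ k) : ContDiffAt ℝ m (deriv f) t := by
  have h1 := (h.fderiv_right hm).clm_apply (contDiffAt_const (c := (1 : ℝ)))
  simpa using h1

theorem pd_sum {d : ℕ} {f : (Fin d → ℝ) → ℝ} {x : Fin d → ℝ} (v : Fin d → ℝ) :
    fderiv ℝ f x v = ∑ a, pd f a x * v a := by
  conv_lhs => rw [← Finset.univ_sum_single v]
  rw [map_sum]
  refine Finset.sum_congr rfl fun a _ => ?_
  have : (Pi.single a (v a) : Fin d → ℝ) = v a • Pi.single a 1 := by
    rw [← Pi.single_smul]; simp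
  rw [this, map_smul, smul_eq_mul, mul_comm]; rfl

theorem KL_contDiffAt {n d : ℕ} {p : (Fin d → ℝ) → Fin n → ℝ} (hp : ContDiff ℝ 2 p)
    {q : Fin n → ℝ} (hq : posProb q) {x : Fin d → ℝ} (hx : ∀ i, 0 < p x i) :
    ContDiffAt ℝ 2 (fun y => KLdiv (p y) q) x := by
  unfold KLdiv
  refine ContDiffAt.sum fun i _ => ?_
  have h1 : ContDiffAt ℝ 2 (fun y => p y i) x := (contDiff_pi.1 hp i).contDiffAt
  exact h1.mul ((h1.div_const _).log (div_pos (hx i) (hq.1 i)).ne')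

theorem deriv_comp_formula {d : ℕ} {F : (Fin d → ℝ) → ℝ} {γ : ℝ → Fin d → ℝ}
    (hγ : ContDiff ℝ 2 γ) {t : ℝ} (hF : ContDiffAt ℝ 2 F (γ t)) :
    deriv (fun u => F (γ u)) t = ∑ k, pd F k (γ t) * deriv γ t k := by
  rw [← pd_sum]
  exact ((hF.differentiableAt (by norm_num)).hasFDerivAt.comp_hasDerivAt t
    (hγ.differentiable (by norm_num) t).hasDerivAt).deriv

theorem deriv2_comp_formula {d : ℕ} {F : (Fin d → ℝ) → ℝ} {γ : ℝ → Fin d → ℝ}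
    (hγ : ContDiff ℝ 2 γ) {t : ℝ} (hF : ContDiffAt ℝ 2 F (γ t)) :
    deriv (fun s => deriv (fun u => F (γ u)) s) t =
      ∑ k, ((∑ a, pd (pd F k) a (γ t) * deriv γ t a) * deriv γ t k
        + pd F k (γ t) * deriv (fun s => deriv γ s k) t) := by
  have hev : ∀ᶠ s in nhds t, ContDiffAt ℝ 2 F (γ s) :=
    hγ.continuous.continuousAt.eventually (hF.eventually (by simp))
  have he : (fun s => deriv (fun u => F (γ u)) s) =ᶠ[nhds t]
      fun s => ∑ k, pd F k (γ s) * deriv γ s k := by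
    filter_upwards [hev] with s hs
    exact deriv_comp_formula hγ hs
  rw [he.deriv_eq]
  have hdγ : ContDiff ℝ 1 (deriv γ) := ((contDiff_succ_iff_deriv (n := 1)).1 hγ).2.2
  refine HasDerivAt.deriv (HasDerivAt.fun_sum fun k _ => HasDerivAt.mul ?_ ?_)
  · rw [← pd_sum]
    have h1 : ContDiffAt ℝ 1 (pd F k) (γ t) := by
      have := hF.fderiv_right (m := 1) (by norm_num)
      exact this.clm_apply contDiffAt_const
    exact (h1.differentiableAt (by norm_num)).hasFDerivAt.comp_hasDerivAt t
      (hγ.differentiable (by norm_num) t).hasDerivAt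
  · exact ((contDiff_pi.1 hdγ k).differentiable (by norm_num) t).hasDerivAt

/-- Under the covariant Hessian bound `H_W ⪰ κ G_W` on `Θ`, for any
constant-speed geodesic `γ` with constant energy `g_W(θ̇,θ̇) = d_W(θ₀,θ₁)²` one has
`∫₀¹ (1−t) d²/dt² D_KL(p(γ_t)‖q) dt ≥ (κ/2) d_W(θ₀,θ₁)²`, and hence by a second-order
Taylor expansion
`D_KL(p(θ₁)‖q) ≥ D_KL(p(θ₀)‖q) + d/dt|₀ D_KL(p(γ_t)‖q) + (κ/2) d_W(θ₀,θ₁)²`. -/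
theorem taylor_geodesic_bound {n d : ℕ} (ω : Fin n → Fin n → ℝ)
    (hω : isWeight ω) (hconn : isConn ω)
    (S : Set (Fin d → ℝ))
    (p : (Fin d → ℝ) → Fin n → ℝ) (hp : ContDiff ℝ 2 p)
    (hpos : ∀ θ ∈ S, posProb (p θ))
    (hrank : ∀ θ ∈ S, (Jac p θ).rank = d)
    (hpd : ∀ θ ∈ S, (GW ω p θ).PosDef)
    (hGW : ∀ i j, ContDiff ℝ 1 (fun θ => GW ω p θ i j))
    (q : Fin n → ℝ) (hq : posProb q)
    (κ : ℝ) (hhess : ∀ θ ∈ S, matGE (HW ω p q θ) (κ • GW ω p θ))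
    (γ : ℝ → Fin d → ℝ) (hgeo : IsGeodesicOn ω p S γ)
    (henergy : ∀ t ∈ Icc (0 : ℝ) 1,
      deriv γ t ⬝ᵥ (GW ω p (γ t)).mulVec (deriv γ t) = dW2 ω p S (γ 0) (γ 1)) :
    (κ / 2 * dW2 ω p S (γ 0) (γ 1)
        ≤ ∫ t in (0 : ℝ)..1,
            (1 - t) * deriv (fun s => deriv (fun u => KLdiv (p (γ u)) q) s) t) ∧
      KLdiv (p (γ 0)) q + deriv (fun s => KLdiv (p (γ s)) q) 0
          + κ / 2 * dW2 ω p S (γ 0) (γ 1)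
        ≤ KLdiv (p (γ 1)) q := by
  obtain ⟨hγ, hS, hgeq⟩ := hgeo
  have hF : ∀ t ∈ Icc (0 : ℝ) 1, ContDiffAt ℝ 2 (fun y => KLdiv (p y) q) (γ t) :=
    fun t ht => KL_contDiffAt hp hq (hpos _ (hS t ht)).1
  set D := dW2 ω p S (γ 0) (γ 1) with hD
  set f : ℝ → ℝ := fun u => KLdiv (p (γ u)) q with hf
  have hfc : ∀ t ∈ Icc (0 : ℝ) 1, ContDiffAt ℝ 2 f t := fun t ht =>
    (hF t ht).comp t hγ.contDiffAt
  have hf1 : ∀ t ∈ Icc (0 : ℝ) 1, ContDiffAt ℝ 1 (deriv f) t := fun t ht =>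
    contDiffAt_deriv_aux (m := 1) (hfc t ht) (by norm_num)
  have hf2 : ∀ t ∈ Icc (0 : ℝ) 1, ContinuousAt (deriv (deriv f)) t := fun t ht =>
    (contDiffAt_deriv_aux (m := 0) (hf1 t ht) (by norm_num)).continuousAt
  have hlow : ∀ t ∈ Icc (0 : ℝ) 1, κ * D ≤ deriv (deriv f) t := by
    intro t ht
    have h1 := deriv2_comp_formula hγ (hF t ht)
    have h2 := hhess _ (hS t ht) (deriv γ t)
    have h3 : deriv γ t ⬝ᵥ (κ • GW ω p (γ t)).mulVec (deriv γ t) = κ * D := by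
      rw [Matrix.smul_mulVec, dotProduct_smul, henergy t ht, smul_eq_mul]
    rw [h3] at h2
    refine h2.trans (le_of_eq ?_)
    refine Eq.trans ?_ h1.symm
    rw [HW, Matrix.sub_mulVec, dotProduct_sub, Finset.sum_add_distrib, sub_eq_add_neg]
    congr 1
    · simp only [dotProduct, Matrix.mulVec, hess, Matrix.of_apply, Finset.mul_sum, Finset.sum_mul]
      rw [Finset.sum_comm]
      refine Finset.sum_congr rfl fun a _ => Finset.sum_congr rfl fun b _ => ?_
      ring
    · rw [Matrix.sum_mulVec, dotProduct_sum, ← Finset.sum_neg_distrib]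
      refine Finset.sum_congr rfl fun k _ => ?_
      rw [Matrix.smul_mulVec, dotProduct_smul, smul_eq_mul, eq_neg_of_add_eq_zero_left (hgeq t ht k),
        mul_neg]
      congr 2
      simp only [dotProduct, Matrix.mulVec, Finset.mul_sum]
      refine Finset.sum_congr rfl fun a _ => Finset.sum_congr rfl fun b _ => ?_
      ring
  have hcont : ContinuousOn (fun t => (1 - t) * deriv (deriv f) t) (uIcc 0 1) := by
    rw [uIcc_of_le zero_le_one]
    intro t ht
    exact ((continuousAt_const.sub continuousAt_id).mul (hf2 t ht)).continuousWithinAt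
  have hint := hcont.intervalIntegrable (μ := MeasureTheory.volume)
  have hmain : κ / 2 * D ≤ ∫ t in (0 : ℝ)..1, (1 - t) * deriv (deriv f) t := by
    have h1 : ∫ t in (0 : ℝ)..1, (1 - t) * (κ * D) = κ / 2 * D := by
      rw [intervalIntegral.integral_mul_const, intervalIntegral.integral_sub (by simp) (by simp)]
      simp only [intervalIntegral.integral_const, integral_id, smul_eq_mul]
      ring
    rw [← h1]
    refine intervalIntegral.integral_mono_on zero_le_one
      (Continuous.intervalIntegrable (by fun_prop) _ _) hint fun t ht => ?_
    exact mul_le_mul_of_nonneg_left (hlow t ht) (by linarith [ht.2])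
  refine ⟨hmain, ?_⟩
  have htay : ∫ t in (0 : ℝ)..1, (1 - t) * deriv (deriv f) t =
      ((1 - 1) * deriv f 1 + f 1) - ((1 - 0) * deriv f 0 + f 0) := by
    refine intervalIntegral.integral_eq_sub_of_hasDerivAt
      (f := fun t => (1 - t) * deriv f t + f t) (fun t ht => ?_) hint
    rw [uIcc_of_le zero_le_one] at ht
    have h1 := ((hf1 t ht).differentiableAt (by norm_num)).hasDerivAt
    have h2 := ((hfc t ht).differentiableAt (by norm_num)).hasDerivAt
    have h3 := (((hasDerivAt_id t).const_sub 1).mul h1).add h2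
    refine h3.congr_deriv ?_
    simp
  rw [htay] at hmain
  change f 0 + deriv f 0 + κ / 2 * D ≤ f 1
  linarith

end
end StatRicci
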